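/- Define Z(x) = −√(2e)·exp(x + x²/2)·∫₀^{(x+1)/√2} e^{−t²} dt for real x, where e = exp(1). Then Z(−1) = 0, Z is differentiable on ℝ, and for every real x, Z'(x) = (x+1)·Z(x) − 1; equivalently, Z solves Z(x)·ϱ(x,1) + Z'(x)·(x·ϱ(x,1) − ϖ(x,1)) = 1 for ϖ(x,y) = x² + xy + y², ϱ(x,y) = xy + y². -/

import Mathlib

/-- `Z(x) = -√(2e)·exp(x + x²/2)·∫₀^{(x+1)/√2} e^{-t²} dt
  = -√(πe/2)·exp(x + x²/2)·erf((x+1)/√2)`. -/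
noncomputable def Zfun (x : ℝ) : ℝ :=
  -Real.sqrt (2 * Real.exp 1) * Real.exp (x + x ^ 2 / 2) *
    ∫ t in (0 : ℝ)..((x + 1) / Real.sqrt 2), Real.exp (-t ^ 2)

/-! Substituting `t = √2 s - 1` turns `Z` into `-e^{P(x)} ∫_{-1}^x e^{-P(t)} dt` with
`P(x) = x + x²/2`, which is the variation of constants formula for `y' = P' y - 1`, `y(-1) = 0`. -/

open Real

theorem hasDerivAt_exp_smul_integral_exp_neg_smul {E : Type*} [NormedAddCommGroup E]
    [NormedSpace ℝ E] [CompleteSpace E] {P : ℝ → ℝ} {q : ℝ → E} {p x : ℝ} (a : ℝ)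
    (hP : Continuous P) (hq : Continuous q) (hPx : HasDerivAt P p x) :
    HasDerivAt (fun y => exp (P y) • ∫ t in a..y, exp (-P t) • q t)
      (p • (exp (P x) • ∫ t in a..x, exp (-P t) • q t) + q x) x := by
  have h_integrand : Continuous fun t => exp (-P t) • q t := by fun_prop
  have h_integral : HasDerivAt (fun y => ∫ t in a..y, exp (-P t) • q t) (exp (-P x) • q x) x :=
    (h_integrand.integral_hasStrictDerivAt a x).hasDerivAt
  refine (hPx.exp.smul h_integral).congr_deriv ?_
  rw [smul_smul, ← exp_add, add_neg_cancel, exp_zero, one_smul, smul_smul, mul_comm p, add_comm]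

theorem exp_neg_mul_add_sq_div_two (m t : ℝ) :
    exp (-(m * t + t ^ 2 / 2)) = exp (m ^ 2 / 2) * exp (-(t / √2 + m / √2) ^ 2) := by
  rw [← exp_add, ← add_div, div_pow, sq_sqrt zero_le_two]
  ring_nf

theorem integral_exp_neg_mul_add_sq_div_two (m a b : ℝ) :
    ∫ t in a..b, exp (-(m * t + t ^ 2 / 2)) =
      √2 * exp (m ^ 2 / 2) * ∫ s in (a + m) / √2..(b + m) / √2, exp (-s ^ 2) := by
  have h_subst : ∫ t in a..b, exp (-(t / √2 + m / √2) ^ 2) =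
      √2 * ∫ s in (a + m) / √2..(b + m) / √2, exp (-s ^ 2) := by
    simpa only [add_div, smul_eq_mul] using
      intervalIntegral.integral_comp_div_add (a := a) (b := b) (fun s => exp (-s ^ 2))
        (sqrt_ne_zero'.mpr two_pos) (m / √2)
  simp_rw [exp_neg_mul_add_sq_div_two, intervalIntegral.integral_const_mul, h_subst]
  ring

theorem Zfun_eq_exp_smul_integral (x : ℝ) :
    Zfun x = exp (x + x ^ 2 / 2) • ∫ t in (-1)..x, exp (-(t + t ^ 2 / 2)) • (-1 : ℝ) := by
  have h_integral := integral_exp_neg_mul_add_sq_div_two 1 (-1) x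
  have h_sqrt : √(2 * exp 1) = √2 * exp (1 / 2) := by
    rw [sqrt_mul zero_le_two, exp_half]
  simp only [one_mul, one_pow, neg_add_cancel, zero_div] at h_integral
  simp only [smul_eq_mul, intervalIntegral.integral_mul_const, h_integral, Zfun, h_sqrt]
  ring

theorem hasDerivAt_Zfun (x : ℝ) : HasDerivAt Zfun ((x + 1) * Zfun x - 1) x := by
  have h_exponent : HasDerivAt (fun t : ℝ => t + t ^ 2 / 2) (x + 1) x := by
    refine ((hasDerivAt_id' x).add ((hasDerivAt_pow 2 x).div_const 2)).congr_deriv ?_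
    norm_num [add_comm]
  rw [sub_eq_add_neg, ← smul_eq_mul, funext Zfun_eq_exp_smul_integral]
  exact hasDerivAt_exp_smul_integral_exp_neg_smul (-1) (by fun_prop) continuous_const h_exponent

/-- `Z(-1) = 0`, `Z` is differentiable, `Z'(x) = (x+1)·Z(x) - 1`; equivalently,
`Z` solves the reduction equation `Z·ϱ(x,1) + Z'·(x·ϱ(x,1) - ϖ(x,1)) = 1` for
`ϖ(x,y) = x² + xy + y²`, `ϱ(x,y) = xy + y²`. -/
theorem Zfun_ODE :
    Zfun (-1) = 0 ∧ Differentiable ℝ Zfun ∧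
    (∀ x : ℝ, deriv Zfun x = (x + 1) * Zfun x - 1) ∧
    (∀ x : ℝ, Zfun x * (x * 1 + 1 ^ 2) +
      deriv Zfun x * (x * (x * 1 + 1 ^ 2) - (x ^ 2 + x * 1 + 1 ^ 2)) = 1) := by
  refine ⟨by simp [Zfun_eq_exp_smul_integral], fun x => (hasDerivAt_Zfun x).differentiableAt,
    fun x => (hasDerivAt_Zfun x).deriv, fun x => ?_⟩
  rw [(hasDerivAt_Zfun x).deriv]
  ring
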